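/- Let Ω ⊂ ℝ^d be compact and convex and μ, ν ∈ 𝒫(Ω). Then the problems sup_{φ ∈ λ-Lip(Ω)} ∫_Ω φ^{c₂} dμ + ∫_Ω φ dν and sup_{φ ∈ C(Ω)} ∫_Ω φ^{c_{2,λ}} dμ + ∫_Ω φ dν are equivalent: they have the same value, any solution of the first is a solution of the second, and any c_{2,λ}-concave solution of the second is a solution of the first. -/

import Mathlib

/-! Write `h` for the Huber cost and `J₁`, `J₂` for the two dual functionals. Three facts about
`h`-transforms on `Ω` give everything.

* `ctrans_huber_lipschitz`: since `h` is `λ`-Lipschitz in each variable, every `h`-transform is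
  `λ`-Lipschitz on `Ω`.
* `ctrans_c2_eq_huber`: if `φ` is `λ`-Lipschitz on `Ω`, then `φ^{c₂} = φ^h` on `Ω`. Indeed `h ≤ c₂`,
  and a competitor `y` with `|x - y| > λ` can be replaced by the point of the segment `[x, y]` at
  distance `λ` from `x`, which lies in `Ω` by convexity. Hence `J₁ = J₂` on `λ`-Lipschitz functions.
* `exists_lipschitz_improvement`: for continuous `ψ`, the double transform `φ = ψ^{hh}` is
  `λ`-Lipschitz, `φ ≥ ψ` and `φ^h ≥ ψ^h` on `Ω`, so `J₂ ψ ≤ J₂ φ = J₁ φ`.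

Thus every value of `J₁` is a value of `J₂`, and every value of `J₂` is dominated by a value of `J₁`.
-/

open MeasureTheory Filter Topology

noncomputable section

abbrev Ed (d : ℕ) := EuclideanSpace ℝ (Fin d)

variable {d : ℕ}

/-- `γ` is a coupling (transport plan) between `μ` and `ν`. -/
def IsCoupling (μ ν : Measure (Ed d)) (γ : Measure (Ed d × Ed d)) : Prop :=
  γ.map Prod.fst = μ ∧ γ.map Prod.snd = ν

/-- The optimal transport cost `𝓘_c(μ,ν)` for the pointwise cost `c`. -/
def tCost (c : Ed d → Ed d → ℝ) (μ ν : Measure (Ed d)) : ℝ :=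
  sInf {r | ∃ γ : Measure (Ed d × Ed d), IsCoupling μ ν γ ∧ r = ∫ p, c p.1 p.2 ∂γ}

/-- The Wasserstein-1 distance. -/
def W1 (μ ν : Measure (Ed d)) : ℝ := tCost (fun x y => ‖x - y‖) μ ν

/-- The squared Wasserstein-2 distance `W₂²(μ,ν)`. -/
def W2sq (μ ν : Measure (Ed d)) : ℝ := tCost (fun x y => ‖x - y‖ ^ 2) μ ν

/-- The quadratic cost `c₂(x,y) = |x-y|²/2`. -/
def c2 (x y : Ed d) : ℝ := ‖x - y‖ ^ 2 / 2

/-- The Huber cost `c_{2,λ}`. -/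
def huber (lam : ℝ) (x y : Ed d) : ℝ :=
  if ‖x - y‖ ≤ lam then ‖x - y‖ ^ 2 / 2 else lam * ‖x - y‖ - lam ^ 2 / 2

/-- The `c`-transform on `Ω`: `φ^c(x) = inf_{y ∈ Ω} c(x,y) - φ(y)`. -/
def ctrans (c : Ed d → Ed d → ℝ) (Ω : Set (Ed d)) (φ : Ed d → ℝ) (x : Ed d) : ℝ :=
  sInf ((fun y => c x y - φ y) '' Ω)

/-- A Borel probability measure concentrated on `Ω`. -/
def ProbOn (Ω : Set (Ed d)) (μ : Measure (Ed d)) : Prop :=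
  IsProbabilityMeasure μ ∧ μ Ωᶜ = 0

/-- `γ` is an optimal transport plan between `μ` and `ν` for cost `c`. -/
def IsOptimalPlan (c : Ed d → Ed d → ℝ) (μ ν : Measure (Ed d))
    (γ : Measure (Ed d × Ed d)) : Prop :=
  IsCoupling μ ν γ ∧ ∀ γ' : Measure (Ed d × Ed d), IsCoupling μ ν γ' →
    ∫ p, c p.1 p.2 ∂γ ≤ ∫ p, c p.1 p.2 ∂γ'

/-- `T` is an optimal transport map from `μ` to `ν` for cost `c`. -/
def IsOptimalMap (c : Ed d → Ed d → ℝ) (μ ν : Measure (Ed d)) (T : Ed d → Ed d) : Prop :=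
  AEMeasurable T μ ∧ μ.map T = ν ∧
    ∀ γ : Measure (Ed d × Ed d), IsCoupling μ ν γ →
      ∫ x, c x (T x) ∂μ ≤ ∫ p, c p.1 p.2 ∂γ

/-- The WROF functional `(1/2) W₂²(μ,ρ) + λ W₁(ρ,ν)`. -/
def wrof (lam : ℝ) (μ ν ρ : Measure (Ed d)) : ℝ := W2sq μ ρ / 2 + lam * W1 ρ ν

/-- `ρ ∈ B_λ(μ)`: there exists an optimal plan for the Huber cost `c_{2,λ}` from `μ` to `ρ`
supported in `{|x-y| ≤ λ}`. -/
def Bset (lam : ℝ) (μ ρ : Measure (Ed d)) : Prop :=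
  ∃ γ : Measure (Ed d × Ed d), IsOptimalPlan (huber lam) μ ρ γ ∧
    γ {p : Ed d × Ed d | lam < ‖p.1 - p.2‖} = 0

/-- `φ` solves the dual problem `sup_{φ ∈ λ-Lip(Ω)} ∫ φ^{c₂} dμ + ∫ φ dν`. -/
def DualSol (Ω : Set (Ed d)) (lam : ℝ) (μ ν : Measure (Ed d)) (φ : Ed d → ℝ) : Prop :=
  LipschitzOnWith (Real.toNNReal lam) φ Ω ∧
    ∀ ψ : Ed d → ℝ, LipschitzOnWith (Real.toNNReal lam) ψ Ω →
      (∫ x, ctrans c2 Ω ψ x ∂μ) + ∫ x, ψ x ∂ν ≤ (∫ x, ctrans c2 Ω φ x ∂μ) + ∫ x, φ x ∂ν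

/-- `φ ∈ ∂((1/2)W₂²(·,μ))(ρ)`, i.e. `φ ∈ C(Ω)` with `∫φ^{c₂}dμ + ∫φ dρ = (1/2)W₂²(ρ,μ)`. -/
def InSubdiffW2 (Ω : Set (Ed d)) (μ ρ : Measure (Ed d)) (φ : Ed d → ℝ) : Prop :=
  ContinuousOn φ Ω ∧ (∫ x, ctrans c2 Ω φ x ∂μ) + ∫ x, φ x ∂ρ = W2sq ρ μ / 2

/-- The divergence `D_λ(ν,ρ)` with reference measure `μ`. -/
def Dlam (Ω : Set (Ed d)) (lam : ℝ) (μ ν ρ : Measure (Ed d)) : EReal :=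
  ((W2sq ν μ / 2 : ℝ) : EReal) - ((W2sq ρ μ / 2 : ℝ) : EReal) -
    ⨆ φ ∈ {φ : Ed d → ℝ | InSubdiffW2 Ω μ ρ φ ∧ LipschitzOnWith (Real.toNNReal lam) φ Ω},
      (((∫ x, φ x ∂ν) - ∫ x, φ x ∂ρ : ℝ) : EReal)

/-- `φ` is `c`-concave on `Ω`: `φ = ψ^c` for some `ψ`. -/
def CConcaveOn (c : Ed d → Ed d → ℝ) (Ω : Set (Ed d)) (φ : Ed d → ℝ) : Prop :=
  ∃ ψ : Ed d → ℝ, ∀ x ∈ Ω, φ x = ctrans c Ω ψ x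

/-- The (topological) support of a measure. -/
def msupport {α : Type*} [TopologicalSpace α] [MeasurableSpace α] (γ : Measure α) : Set α :=
  {p | ∀ U : Set α, IsOpen U → p ∈ U → γ U ≠ 0}

lemma huber_le_c2 (lam : ℝ) (x y : Ed d) : huber lam x y ≤ c2 x y := by
  unfold huber c2
  split_ifs
  · exact le_rfl
  · nlinarith [sq_nonneg (‖x - y‖ - lam)]

lemma huber_comm (lam : ℝ) (x y : Ed d) : huber lam x y = huber lam y x := by
  unfold huber
  rw [norm_sub_rev]

lemma huber_nonneg {lam : ℝ} (hlam : 0 < lam) (x y : Ed d) : 0 ≤ huber lam x y := by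
  unfold huber
  split_ifs with h
  · positivity
  · push Not at h
    nlinarith

lemma huber_lipschitz {lam : ℝ} (hlam : 0 < lam) (x x' y : Ed d) :
    huber lam x y ≤ huber lam x' y + lam * ‖x - x'‖ := by
  have htri : ‖x - y‖ ≤ ‖x - x'‖ + ‖x' - y‖ := norm_sub_le_norm_sub_add_norm_sub x x' y
  have h0 := norm_nonneg (x - x')
  have h1 := norm_nonneg (x' - y)
  have h2 := norm_nonneg (x - y)
  unfold huber
  generalize ‖x - y‖ = t at *
  generalize ‖x' - y‖ = s at *
  generalize ‖x - x'‖ = r at *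
  have hm : lam * t ≤ lam * (r + s) := mul_le_mul_of_nonneg_left htri hlam.le
  split_ifs with ht hs hs
  · rcases le_total t s with hts | hts
    · nlinarith [mul_nonneg hlam.le h0]
    · nlinarith [mul_le_mul_of_nonneg_left (show t - s ≤ r by linarith) hlam.le,
        mul_nonneg (sub_nonneg.2 hts) (show 0 ≤ 2 * lam - t - s by linarith)]
  · push Not at hs
    nlinarith [sq_nonneg (t - lam)]
  · nlinarith [sq_nonneg (s - lam)]
  · linarith

lemma lipschitzOn_iff {lam : ℝ} (hlam : 0 < lam) {Ω : Set (Ed d)} {φ : Ed d → ℝ} :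
    LipschitzOnWith (Real.toNNReal lam) φ Ω ↔
      ∀ x ∈ Ω, ∀ y ∈ Ω, φ x ≤ φ y + lam * ‖x - y‖ := by
  constructor
  · intro h x hx y hy
    have := h.dist_le_mul x hx y hy
    rw [Real.coe_toNNReal _ hlam.le, Real.dist_eq, dist_eq_norm] at this
    linarith [le_abs_self (φ x - φ y)]
  · intro h
    refine LipschitzOnWith.of_dist_le_mul fun x hx y hy => ?_
    rw [Real.coe_toNNReal _ hlam.le, Real.dist_eq, dist_eq_norm, abs_le]
    have h1 := h x hx y hy
    have h2 := h y hy x hx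
    rw [norm_sub_rev] at h2
    constructor <;> linarith

/-- The function `ψ` is arbitrary: if the infimum is `-∞` at one point, it is so at every point,
and the transform is then the constant junk value `0`. -/
lemma ctrans_huber_lipschitz {lam : ℝ} (hlam : 0 < lam) {Ω : Set (Ed d)} (hne : Ω.Nonempty)
    (ψ : Ed d → ℝ) : LipschitzOnWith (Real.toNNReal lam) (ctrans (huber lam) Ω ψ) Ω := by
  have hb : ∀ x x' : Ed d, BddBelow ((fun y => huber lam x y - ψ y) '' Ω) →
      BddBelow ((fun y => huber lam x' y - ψ y) '' Ω) := by
    rintro x x' ⟨m, hm⟩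
    refine ⟨m - lam * ‖x - x'‖, ?_⟩
    rintro _ ⟨y, hy, rfl⟩
    have h1 : m ≤ huber lam x y - ψ y := hm ⟨y, hy, rfl⟩
    have h2 := huber_lipschitz hlam x x' y
    dsimp only
    linarith
  rw [lipschitzOn_iff hlam]
  intro x _ x' _
  unfold ctrans
  by_cases hx : BddBelow ((fun y => huber lam x y - ψ y) '' Ω)
  · rw [← sub_le_iff_le_add]
    refine le_csInf (hne.image _) ?_
    rintro _ ⟨y, hy, rfl⟩
    have h1 : sInf ((fun y => huber lam x y - ψ y) '' Ω) ≤ huber lam x y - ψ y :=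
      csInf_le hx ⟨y, hy, rfl⟩
    have h2 := huber_lipschitz hlam x x' y
    dsimp only
    linarith
  · rw [Real.sInf_of_not_bddBelow hx, Real.sInf_of_not_bddBelow (fun h => hx (hb x' x h))]
    positivity

lemma bddBelow_ctrans {c : Ed d → Ed d → ℝ} (hc : ∀ x y, 0 ≤ c x y) {Ω : Set (Ed d)}
    (hΩc : IsCompact Ω) {φ : Ed d → ℝ} (hφ : ContinuousOn φ Ω) (x : Ed d) :
    BddBelow ((fun y => c x y - φ y) '' Ω) := by
  obtain ⟨M, hM⟩ := hΩc.bddAbove_image hφ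
  refine ⟨-M, ?_⟩
  rintro _ ⟨y, hy, rfl⟩
  have h1 : φ y ≤ M := hM ⟨y, hy, rfl⟩
  have h2 := hc x y
  dsimp only
  linarith

lemma ctrans_c2_eq_huber {lam : ℝ} (hlam : 0 < lam) {Ω : Set (Ed d)} (hΩc : IsCompact Ω)
    (hΩconv : Convex ℝ Ω) {φ : Ed d → ℝ}
    (hφ : LipschitzOnWith (Real.toNNReal lam) φ Ω) {x : Ed d} (hx : x ∈ Ω) :
    ctrans c2 Ω φ x = ctrans (huber lam) Ω φ x := by
  have hne : Ω.Nonempty := ⟨x, hx⟩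
  have hb1 := bddBelow_ctrans (c := c2) (fun x y => by unfold c2; positivity) hΩc
    hφ.continuousOn x
  have hb2 := bddBelow_ctrans (huber_nonneg hlam) hΩc hφ.continuousOn x
  unfold ctrans
  apply le_antisymm
  · refine le_csInf (hne.image _) ?_
    rintro _ ⟨y, hy, rfl⟩
    dsimp only
    by_cases hxy : ‖x - y‖ ≤ lam
    · refine csInf_le_of_le hb1 ⟨y, hy, rfl⟩ ?_
      simp [huber, hxy, c2]
    · push Not at hxy
      have hpos : 0 < ‖x - y‖ := hlam.trans hxy
      -- the point of `[x, y]` at distance `lam` from `x`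
      set t : ℝ := lam / ‖x - y‖ with ht
      have htm : t * ‖x - y‖ = lam := by rw [ht]; field_simp
      have ht0 : 0 ≤ t := by positivity
      have ht1 : t ≤ 1 := by rw [ht, div_le_one hpos]; exact hxy.le
      have hz : (1 - t) • x + t • y ∈ Ω := hΩconv hx hy (by linarith) ht0 (by ring)
      set z := (1 - t) • x + t • y with hzdef
      have hxz : ‖x - z‖ = lam := by
        have : x - z = t • (x - y) := by rw [hzdef]; module
        rw [this, norm_smul, Real.norm_of_nonneg ht0, htm]
      have hyz : ‖y - z‖ = ‖x - y‖ - lam := by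
        have : y - z = (1 - t) • (y - x) := by rw [hzdef]; module
        rw [this, norm_smul, Real.norm_of_nonneg (by linarith), norm_sub_rev y x]
        linarith
      have hL := (lipschitzOn_iff hlam).1 hφ y hy z hz
      refine csInf_le_of_le hb1 ⟨z, hz, rfl⟩ ?_
      rw [hyz] at hL
      simp only [c2, huber, hxz, not_le.2 hxy, if_false]
      linarith
  · refine le_csInf (hne.image _) ?_
    rintro _ ⟨y, hy, rfl⟩
    exact csInf_le_of_le hb2 ⟨y, hy, rfl⟩ (by linarith [huber_le_c2 lam x y])

lemma ProbOn.ae_mem {Ω : Set (Ed d)} {μ : Measure (Ed d)} (hμ : ProbOn Ω μ) :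
    ∀ᵐ x ∂μ, x ∈ Ω := hμ.2

lemma ProbOn.nonempty {Ω : Set (Ed d)} {μ : Measure (Ed d)} (hμ : ProbOn Ω μ) :
    Ω.Nonempty := by
  have := hμ.1
  obtain ⟨x, hx⟩ := hμ.ae_mem.exists
  exact ⟨x, hx⟩

lemma ProbOn.integrable {Ω : Set (Ed d)} (hΩc : IsCompact Ω) {μ : Measure (Ed d)}
    (hμ : ProbOn Ω μ) {f : Ed d → ℝ} (hf : ContinuousOn f Ω) : Integrable f μ := by
  have := hμ.1
  have h := hf.integrableOn_compact (μ := μ) hΩc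
  rwa [IntegrableOn, Measure.restrict_eq_self_of_ae_mem hμ.ae_mem] at h

lemma dual_values_eq {lam : ℝ} (hlam : 0 < lam) {Ω : Set (Ed d)} (hΩc : IsCompact Ω)
    (hΩconv : Convex ℝ Ω) {μ ν : Measure (Ed d)} (hμ : ProbOn Ω μ) {φ : Ed d → ℝ}
    (hφ : LipschitzOnWith (Real.toNNReal lam) φ Ω) :
    (∫ x, ctrans c2 Ω φ x ∂μ) + ∫ x, φ x ∂ν
      = (∫ x, ctrans (huber lam) Ω φ x ∂μ) + ∫ x, φ x ∂ν := by
  congr 1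
  refine integral_congr_ae ?_
  filter_upwards [hμ.ae_mem] with x hx
  exact ctrans_c2_eq_huber hlam hΩc hΩconv hφ hx

/-- The improvement is the double Huber transform of `ψ`. -/
lemma exists_lipschitz_improvement {lam : ℝ} (hlam : 0 < lam) {Ω : Set (Ed d)}
    (hΩc : IsCompact Ω) (hΩconv : Convex ℝ Ω) {μ ν : Measure (Ed d)} (hμ : ProbOn Ω μ)
    (hν : ProbOn Ω ν) {ψ : Ed d → ℝ} (hψ : ContinuousOn ψ Ω) :
    ∃ φ : Ed d → ℝ, LipschitzOnWith (Real.toNNReal lam) φ Ω ∧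
      (∫ x, ctrans (huber lam) Ω ψ x ∂μ) + ∫ x, ψ x ∂ν
        ≤ (∫ x, ctrans c2 Ω φ x ∂μ) + ∫ x, φ x ∂ν := by
  have hne := hμ.nonempty
  have hL1 := ctrans_huber_lipschitz hlam hne ψ
  have hL2 := ctrans_huber_lipschitz hlam hne (ctrans (huber lam) Ω ψ)
  have hL3 := ctrans_huber_lipschitz hlam hne (ctrans (huber lam) Ω (ctrans (huber lam) Ω ψ))
  refine ⟨_, hL2, ?_⟩
  rw [dual_values_eq hlam hΩc hΩconv hμ hL2]
  -- `f ≤ f^{hh}` on `Ω`, to be applied to `f = ψ` and to `f = ψ^h`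
  have key : ∀ f : Ed d → ℝ, ContinuousOn f Ω → ∀ x ∈ Ω,
      f x ≤ ctrans (huber lam) Ω (ctrans (huber lam) Ω f) x := by
    intro f hf x hx
    refine le_csInf (hne.image _) ?_
    rintro _ ⟨y, hy, rfl⟩
    have h1 : ctrans (huber lam) Ω f y ≤ huber lam y x - f x :=
      csInf_le (bddBelow_ctrans (huber_nonneg hlam) hΩc hf y) ⟨x, hx, rfl⟩
    rw [huber_comm] at h1
    dsimp only
    linarith
  refine add_le_add ?_ ?_
  · refine integral_mono_ae (hμ.integrable hΩc hL1.continuousOn)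
      (hμ.integrable hΩc hL3.continuousOn) ?_
    filter_upwards [hμ.ae_mem] with x hx
    exact key _ hL1.continuousOn x hx
  · refine integral_mono_ae (hν.integrable hΩc hψ) (hν.integrable hΩc hL2.continuousOn) ?_
    filter_upwards [hν.ae_mem] with x hx
    exact key _ hψ x hx

/-- equivalence of the two dual problems. For `Ω ⊂ ℝ^d` compact convex
and `μ, ν ∈ 𝒫(Ω)`, the problems
`sup_{φ ∈ λ-Lip(Ω)} ∫ φ^{c₂} dμ + ∫ φ dν` and
`sup_{φ ∈ C(Ω)} ∫ φ^{c_{2,λ}} dμ + ∫ φ dν`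
have the same value, any solution of the first solves the second, and any `c_{2,λ}`-concave
solution of the second solves the first. -/
theorem stmt8 (d : ℕ) (Ω : Set (Ed d)) (hΩc : IsCompact Ω) (hΩconv : Convex ℝ Ω)
    (μ ν : Measure (Ed d)) (hμ : ProbOn Ω μ) (hν : ProbOn Ω ν)
    (lam : ℝ) (hlam : 0 < lam) :
    -- the values coincide:
    sSup {r : ℝ | ∃ φ : Ed d → ℝ, LipschitzOnWith (Real.toNNReal lam) φ Ω ∧
        r = (∫ x, ctrans c2 Ω φ x ∂μ) + ∫ x, φ x ∂ν}
      = sSup {r : ℝ | ∃ φ : Ed d → ℝ, ContinuousOn φ Ω ∧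
        r = (∫ x, ctrans (huber lam) Ω φ x ∂μ) + ∫ x, φ x ∂ν} ∧
    -- a solution of the first problem is a solution of the second:
    (∀ φ : Ed d → ℝ, LipschitzOnWith (Real.toNNReal lam) φ Ω →
      (∀ ψ : Ed d → ℝ, LipschitzOnWith (Real.toNNReal lam) ψ Ω →
        (∫ x, ctrans c2 Ω ψ x ∂μ) + ∫ x, ψ x ∂ν
          ≤ (∫ x, ctrans c2 Ω φ x ∂μ) + ∫ x, φ x ∂ν) →
      ContinuousOn φ Ω ∧
        ∀ ψ : Ed d → ℝ, ContinuousOn ψ Ω →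
          (∫ x, ctrans (huber lam) Ω ψ x ∂μ) + ∫ x, ψ x ∂ν
            ≤ (∫ x, ctrans (huber lam) Ω φ x ∂μ) + ∫ x, φ x ∂ν) ∧
    -- a `c_{2,λ}`-concave solution of the second problem is a solution of the first:
    (∀ φ : Ed d → ℝ, ContinuousOn φ Ω → CConcaveOn (huber lam) Ω φ →
      (∀ ψ : Ed d → ℝ, ContinuousOn ψ Ω →
        (∫ x, ctrans (huber lam) Ω ψ x ∂μ) + ∫ x, ψ x ∂ν
          ≤ (∫ x, ctrans (huber lam) Ω φ x ∂μ) + ∫ x, φ x ∂ν) →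
      LipschitzOnWith (Real.toNNReal lam) φ Ω ∧
        ∀ ψ : Ed d → ℝ, LipschitzOnWith (Real.toNNReal lam) ψ Ω →
          (∫ x, ctrans c2 Ω ψ x ∂μ) + ∫ x, ψ x ∂ν
            ≤ (∫ x, ctrans c2 Ω φ x ∂μ) + ∫ x, φ x ∂ν) := by
  refine ⟨?_, ?_, ?_⟩
  · have hsub : {r : ℝ | ∃ φ : Ed d → ℝ, LipschitzOnWith (Real.toNNReal lam) φ Ω ∧
          r = (∫ x, ctrans c2 Ω φ x ∂μ) + ∫ x, φ x ∂ν}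
        ⊆ {r : ℝ | ∃ φ : Ed d → ℝ, ContinuousOn φ Ω ∧
          r = (∫ x, ctrans (huber lam) Ω φ x ∂μ) + ∫ x, φ x ∂ν} := by
      rintro r ⟨φ, hφ, rfl⟩
      exact ⟨φ, hφ.continuousOn, dual_values_eq hlam hΩc hΩconv hμ hφ⟩
    have hdom : ∀ r ∈ {r : ℝ | ∃ φ : Ed d → ℝ, ContinuousOn φ Ω ∧
          r = (∫ x, ctrans (huber lam) Ω φ x ∂μ) + ∫ x, φ x ∂ν},
        ∃ s ∈ {r : ℝ | ∃ φ : Ed d → ℝ, LipschitzOnWith (Real.toNNReal lam) φ Ω ∧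
          r = (∫ x, ctrans c2 Ω φ x ∂μ) + ∫ x, φ x ∂ν}, r ≤ s := by
      rintro r ⟨ψ, hψ, rfl⟩
      obtain ⟨φ, hφ, hle⟩ := exists_lipschitz_improvement hlam hΩc hΩconv hμ hν hψ
      exact ⟨_, ⟨φ, hφ, rfl⟩, hle⟩
    generalize {r : ℝ | ∃ φ : Ed d → ℝ, ContinuousOn φ Ω ∧
          r = (∫ x, ctrans (huber lam) Ω φ x ∂μ) + ∫ x, φ x ∂ν} = T at hsub hdom ⊢
    have hSne : {r : ℝ | ∃ φ : Ed d → ℝ, LipschitzOnWith (Real.toNNReal lam) φ Ω ∧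
          r = (∫ x, ctrans c2 Ω φ x ∂μ) + ∫ x, φ x ∂ν}.Nonempty :=
      ⟨_, fun _ => 0, LipschitzWith.const' 0 |>.weaken zero_le |>.lipschitzOnWith, rfl⟩
    generalize {r : ℝ | ∃ φ : Ed d → ℝ, LipschitzOnWith (Real.toNNReal lam) φ Ω ∧
          r = (∫ x, ctrans c2 Ω φ x ∂μ) + ∫ x, φ x ∂ν} = S at hsub hdom hSne ⊢
    by_cases hT : BddAbove T
    · refine le_antisymm (csSup_le_csSup hT hSne hsub) (csSup_le (hSne.mono hsub) ?_)
      intro r hr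
      obtain ⟨s, hs, hrs⟩ := hdom r hr
      exact hrs.trans (le_csSup (hT.mono hsub) hs)
    · -- in the unbounded case both suprema are the junk value `0`
      have hS : ¬ BddAbove S := by
        rintro ⟨M, hM⟩
        refine hT ⟨M, fun r hr => ?_⟩
        obtain ⟨s, hs, hrs⟩ := hdom r hr
        exact hrs.trans (hM hs)
      rw [Real.sSup_of_not_bddAbove hT, Real.sSup_of_not_bddAbove hS]
  · intro φ hφ hopt
    refine ⟨hφ.continuousOn, fun ψ hψ => ?_⟩
    obtain ⟨φ', hφ', hle⟩ := exists_lipschitz_improvement hlam hΩc hΩconv hμ hν hψ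
    rw [← dual_values_eq hlam hΩc hΩconv hμ hφ]
    exact hle.trans (hopt φ' hφ')
  · rintro φ - ⟨ψ₀, hψ₀⟩ hopt
    have hφ : LipschitzOnWith (Real.toNNReal lam) φ Ω := by
      rw [lipschitzOn_iff hlam]
      intro x hx y hy
      rw [hψ₀ x hx, hψ₀ y hy]
      exact (lipschitzOn_iff hlam).1 (ctrans_huber_lipschitz hlam hμ.nonempty ψ₀) x hx y hy
    refine ⟨hφ, fun ψ hψ => ?_⟩
    rw [dual_values_eq hlam hΩc hΩconv hμ hφ, dual_values_eq hlam hΩc hΩconv hμ hψ]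
    exact hopt ψ hψ.continuousOn
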